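/- Let N ≥ 0 and M ≥ 1 be integers, let Δx, Δt > 0 and let δ satisfy 0 < δ ≤ ½·min(Δt/Δx, 1). Suppose the bivariate polynomials q_j (of total degree ≤ N, one on each control volume C_j) and g_k (of total degree ≤ N, one on each sliver S_k, k even) satisfy, for every bivariate polynomial test function θ of total degree ≤ N: (element equations) ∫_{Ω_j} θ(x,Δt) q_j(x,Δt) dx − ∬_{C_j} (∂_tθ + ∂_xθ) q_j dx dt + Σ_F ∫_F θ 𝓕(q_j, r_F, n_F) ds = ∫_{Ω_j} θ(x,0) u_j(x) dx for every cell index j, where the sum runs over the lateral faces F of C_j, n_F is the outward unit normal of C_j on F, ds is the arclength measure, and r_F is the neighbouring solution across F (the sliver solution g_k on a sliver face, the neighbouring element solution on a vertical interface); (sliver equations) ∫_{Σ_k^−} θ 𝓕(g_k, q_{k−1}, n) ds + ∫_{Σ_k^+} θ 𝓕(g_k, q_k, n) ds = ∬_{S_k} (∂_tθ + ∂_xθ) g_k dx dt for every even k, where Σ_k^− and Σ_k^+ are respectively the two left faces and the two right faces of S_k and n is the outward unit normal of S_k. Then the one-step L² stability estimate Σ_j ∫_{Ω_j} q_j(x,Δt)²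 dx ≤ Σ_j ∫_{Ω_j} u_j(x)² dx holds; in particular, iterating with u_j := (previous step's trace at time Δt), the implicit ADER-DG method on this degenerate geometry is L² stable for the linear advection equation ∂_t u + ∂_x u = 0. -/

import Mathlib

/-!
The proof is an energy estimate. Testing every element and sliver equation with its own solution
turns the volume term into half the divergence of the square (`self_test`), and the divergence
theorem moves it to the boundary of the control volume. What remains on each lateral face is a
`faceEnergy` seen from each of its two sides, and for the upwind flux the two contributions add up
to `½ |n_x + n_t| ∫ (q⁻ - q⁺)² ≥ 0` (`faceEnergy_add_nonneg`). Every lateral face is shared by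
exactly two control volumes, the periodicity being handled by the cyclic shift `m ↦ (m + 1) % M`,
so after summation only
`½ Σ ∫ q(·,Δt)² + ½ Σ ∫ q(·,0)² ≤ Σ ∫ q(·,0) u` is left, and Young's inequality on the right-hand
side (`integral_mul_le_half_sq`) gives the claim.

The divergence theorem for a polynomial `P` on the three control volumes (`sliver_divergence`,
`leftSliver_divergence`, `rightSliver_divergence`) is obtained by Fubini: the horizontal sections
are intervals up to endpoints, so only the inclusion of the closed sliver in the closed rhombus
is needed. With `Q` a polynomial such that `∂ₓQ = P`, the function `W = ∂ₜQ + P` is an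
`x`-antiderivative of `∂ₜP + ∂ₓP`, and integrating `W` in time along each straight piece of the
boundary is the fundamental theorem of calculus for `Q` along that piece (`segment_integral`).
-/

open MeasureTheory

/-- Evaluation of a bivariate polynomial `P` at the spacetime point `(x, t)`
(variable `0` is space, variable `1` is time). -/
noncomputable def evalP (P : MvPolynomial (Fin 2) ℝ) (x t : ℝ) : ℝ :=
  MvPolynomial.eval ![x, t] P

/-- The upwind (Rusanov) numerical flux for the linear advection equation
`∂ₜu + ∂ₓu = 0`:  `𝓕(q⁻, q⁺, n) = ½[(q⁺+q⁻)(n_x+n_t) − (q⁺−q⁻)|n_x+n_t|]`,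
where `q⁻` is the state on the side from which `n` points outward.  It is
positively homogeneous in `n`, so evaluating it on the scaled outward normal
whose length is the face length gives exactly `∫_F 𝓕(·,·,n̂) ds` after the
parametrisation of a face by `[0,1]`. -/
noncomputable def upwindFlux (qm qp nx nt : ℝ) : ℝ :=
  ((qp + qm) * (nx + nt) - (qp - qm) * |nx + nt|) / 2

/-- The open sliver (rhombus) of maximal half-width `δΔx` centred at the
interface point `x₀`, with vertices `(x₀,0)`, `(x₀+δΔx, Δt/2)`, `(x₀, Δt)` and
`(x₀−δΔx, Δt/2)`. -/
def sliverAt (Δx Δt δ x₀ : ℝ) : Set (ℝ × ℝ) :=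
  {p | |p.1 - x₀| * (Δt / 2) + |p.2 - Δt / 2| * (δ * Δx) < δ * Δx * (Δt / 2)}

/-- Reference control volume of a cell whose *left* interface carries a sliver
(an even cell): `((0,Δx)×(0,Δt))` minus the closure of the sliver at `x = 0`. -/
def cellCVleftSliver (Δx Δt δ : ℝ) : Set (ℝ × ℝ) :=
  (Set.Ioo 0 Δx ×ˢ Set.Ioo 0 Δt) \ closure (sliverAt Δx Δt δ 0)

/-- Reference control volume of a cell whose *right* interface carries a sliver
(an odd cell): `((0,Δx)×(0,Δt))` minus the closure of the sliver at `x = Δx`. -/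
def cellCVrightSliver (Δx Δt δ : ℝ) : Set (ℝ × ℝ) :=
  (Set.Ioo 0 Δx ×ˢ Set.Ioo 0 Δt) \ closure (sliverAt Δx Δt δ Δx)

/-- The half-width at time `t` of the rhombus of height `T` and maximal half-width `e`. -/
noncomputable def halfWidth (T e t : ℝ) : ℝ := e - |t - T / 2| * (2 * e / T)

/-- The contribution to the energy balance of one side of a face with scaled normal `(nx, nt)`:
the flux tested against the inner state `f` (`h` is the outer state), minus the boundary term
`½ (nx + nt) ∫ f²` that the divergence theorem produces on that face. -/
noncomputable def faceEnergy (L : ℝ) (f h : ℝ → ℝ) (nx nt : ℝ) : ℝ :=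
  (∫ s in (0:ℝ)..L, f s * upwindFlux (f s) (h s) nx nt)
    - (nx + nt) / 2 * ∫ s in (0:ℝ)..L, f s ^ 2

/-! ### Calculus of bivariate polynomials -/

lemma evalP_continuous (P : MvPolynomial (Fin 2) ℝ) :
    Continuous fun p : ℝ × ℝ => evalP P p.1 p.2 := by
  unfold evalP
  refine (MvPolynomial.continuous_eval P).comp ?_
  refine continuous_pi fun i => ?_
  fin_cases i
  · exact continuous_fst
  · exact continuous_snd

@[fun_prop]
lemma evalP_comp_continuous (P : MvPolynomial (Fin 2) ℝ) {f h : ℝ → ℝ}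
    (hf : Continuous f) (hh : Continuous h) : Continuous fun s => evalP P (f s) (h s) :=
  (evalP_continuous P).comp₂ hf hh

lemma evalP_add (P Q : MvPolynomial (Fin 2) ℝ) (x t : ℝ) :
    evalP (P + Q) x t = evalP P x t + evalP Q x t := by simp [evalP]

lemma evalP_mul (P Q : MvPolynomial (Fin 2) ℝ) (x t : ℝ) :
    evalP (P * Q) x t = evalP P x t * evalP Q x t := by simp [evalP]

lemma evalP_hasDerivAt (P : MvPolynomial (Fin 2) ℝ) {f h : ℝ → ℝ} {f' h' s : ℝ}
    (hf : HasDerivAt f f' s) (hh : HasDerivAt h h' s) :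
    HasDerivAt (fun s => evalP P (f s) (h s))
      (f' * evalP (MvPolynomial.pderiv 0 P) (f s) (h s)
        + h' * evalP (MvPolynomial.pderiv 1 P) (f s) (h s)) s := by
  induction P using MvPolynomial.induction_on with
  | C a => simpa [evalP] using hasDerivAt_const s a
  | add p q hp hq =>
    simp only [map_add, evalP_add]
    exact (hp.add hq).congr_deriv (by ring)
  | mul_X p i hp =>
    fin_cases i
    · have hX : ∀ x t, evalP (MvPolynomial.X (0 : Fin 2)) x t = x := by simp [evalP]
      simp only [Fin.zero_eta, evalP_mul, hX]
      refine (hp.mul hf).congr_deriv ?_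
      simp [evalP, MvPolynomial.pderiv_X]
      ring
    · have hX : ∀ x t, evalP (MvPolynomial.X (1 : Fin 2)) x t = t := by simp [evalP]
      simp only [Fin.mk_one, evalP_mul, hX]
      refine (hp.mul hh).congr_deriv ?_
      simp [evalP, MvPolynomial.pderiv_X]
      ring

lemma pderiv_zero_one_comm (P : MvPolynomial (Fin 2) ℝ) :
    MvPolynomial.pderiv 0 (MvPolynomial.pderiv 1 P)
      = MvPolynomial.pderiv 1 (MvPolynomial.pderiv 0 P) := by
  have h : ⁅MvPolynomial.pderiv (R := ℝ) (0 : Fin 2), MvPolynomial.pderiv (R := ℝ) (1 : Fin 2)⁆ = 0 := by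
    ext i
    simp [Derivation.commutator_apply, MvPolynomial.pderiv_X, Pi.single_apply, apply_ite]
  have := congrArg (fun D => D P) h
  simpa [Derivation.commutator_apply, sub_eq_zero] using this

lemma exists_pderiv_zero_eq (P : MvPolynomial (Fin 2) ℝ) :
    ∃ Q : MvPolynomial (Fin 2) ℝ, MvPolynomial.pderiv 0 Q = P := by
  induction P using MvPolynomial.induction_on' with
  | monomial s a =>
    refine ⟨MvPolynomial.monomial (s + Finsupp.single 0 1) (a / (s 0 + 1)), ?_⟩
    have : (s 0 : ℝ) + 1 ≠ 0 := by positivity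
    simp [MvPolynomial.pderiv_monomial, div_mul_cancel₀ _ this]
  | add p q hp hq =>
    obtain ⟨Q₁, h₁⟩ := hp
    obtain ⟨Q₂, h₂⟩ := hq
    exact ⟨Q₁ + Q₂, by rw [map_add, h₁, h₂]⟩

/-! ### Integration along the lateral boundaries -/

/-- Fundamental theorem of calculus for `Q` along a segment with direction `(A, B)`, where
`∂ₓQ = P`.  With `W := ∂ₜQ + P`, an `x`-antiderivative of `∂ₜP + ∂ₓP`, it trades `∫ W dt` for the
endpoint values of `Q` and the outflow of `P` through the segment. -/
lemma segment_integral {P Q : MvPolynomial (Fin 2) ℝ} (hQ : MvPolynomial.pderiv 0 Q = P)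
    (x₀ t₀ A B L : ℝ) :
    B * ∫ s in (0:ℝ)..L, evalP (MvPolynomial.pderiv 1 Q + P) (x₀ + s * A) (t₀ + s * B)
      = evalP Q (x₀ + L * A) (t₀ + L * B) - evalP Q x₀ t₀
        + (B - A) * ∫ s in (0:ℝ)..L, evalP P (x₀ + s * A) (t₀ + s * B) := by
  have hd : ∀ s : ℝ, HasDerivAt (fun s => evalP Q (x₀ + s * A) (t₀ + s * B))
      (A * evalP P (x₀ + s * A) (t₀ + s * B)
        + B * evalP (MvPolynomial.pderiv 1 Q) (x₀ + s * A) (t₀ + s * B)) s := by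
    intro s
    have h1 : HasDerivAt (fun s => x₀ + s * A) A s := by
      simpa using ((hasDerivAt_id s).mul_const A).const_add x₀
    have h2 : HasDerivAt (fun s => t₀ + s * B) B s := by
      simpa using ((hasDerivAt_id s).mul_const B).const_add t₀
    simpa [hQ] using evalP_hasDerivAt Q h1 h2
  have hft := intervalIntegral.integral_eq_sub_of_hasDerivAt (a := 0) (b := L)
    (fun s _ => hd s) (Continuous.intervalIntegrable (by fun_prop) _ _)
  rw [intervalIntegral.integral_add (Continuous.intervalIntegrable (by fun_prop) _ _)
    (Continuous.intervalIntegrable (by fun_prop) _ _), intervalIntegral.integral_const_mul,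
    intervalIntegral.integral_const_mul] at hft
  simp only [evalP_add]
  rw [intervalIntegral.integral_add (Continuous.intervalIntegrable (by fun_prop) _ _)
    (Continuous.intervalIntegrable (by fun_prop) _ _)]
  simp only [zero_mul, add_zero] at hft
  linarith

lemma halfWidth_continuous (T e : ℝ) : Continuous (halfWidth T e) := by
  unfold halfWidth; fun_prop

lemma halfWidth_lower {T : ℝ} (hT : 0 < T) (e : ℝ) {s : ℝ} (hs : s ≤ 1) :
    halfWidth T e (s * (T / 2)) = s * e := by
  have : s * (T / 2) - T / 2 ≤ 0 := by nlinarith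
  rw [halfWidth, abs_of_nonpos this]
  field_simp
  ring

lemma halfWidth_upper {T : ℝ} (hT : 0 < T) (e : ℝ) {s : ℝ} (hs : 0 ≤ s) :
    halfWidth T e ((1 + s) * (T / 2)) = (1 - s) * e := by
  have : 0 ≤ (1 + s) * (T / 2) - T / 2 := by nlinarith
  rw [halfWidth, abs_of_nonneg this]
  field_simp
  ring

/-- `segment_integral` along the two sides of a rhombus with axis `x = c`: the right-hand sides
for `σ = 1`, the left-hand sides for `σ = -1`. -/
lemma bent_curve_integral {P Q : MvPolynomial (Fin 2) ℝ} (hQ : MvPolynomial.pderiv 0 Q = P)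
    {T : ℝ} (hT : 0 < T) (e c σ : ℝ) :
    ∫ t in (0:ℝ)..T, evalP (MvPolynomial.pderiv 1 Q + P) (c + σ * halfWidth T e t) t
      = evalP Q c T - evalP Q c 0
        + (T / 2 - σ * e) * (∫ s in (0:ℝ)..1, evalP P (c + σ * (s * e)) (s * (T / 2)))
        + (T / 2 + σ * e) *
          ∫ s in (0:ℝ)..1, evalP P (c + σ * ((1 - s) * e)) ((1 + s) * (T / 2)) := by
  set W := MvPolynomial.pderiv 1 Q + P with hW
  have hc := halfWidth_continuous T e
  have hcont : Continuous fun t => evalP W (c + σ * halfWidth T e t) t := by fun_prop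
  rw [← intervalIntegral.integral_add_adjacent_intervals (b := T / 2)
    (hcont.intervalIntegrable _ _) (hcont.intervalIntegrable _ _)]
  have h1 : ∫ t in (0:ℝ)..T / 2, evalP W (c + σ * halfWidth T e t) t
      = T / 2 * ∫ s in (0:ℝ)..1, evalP W (c + s * (σ * e)) (0 + s * (T / 2)) := by
    have := intervalIntegral.mul_integral_comp_mul_right (a := 0) (b := 1)
      (f := fun t => evalP W (c + σ * halfWidth T e t) t) (c := T / 2)
    rw [zero_mul, one_mul] at this
    rw [← this]
    congr 1
    refine intervalIntegral.integral_congr fun s hs => ?_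
    rw [Set.uIcc_of_le zero_le_one] at hs
    simp only [halfWidth_lower hT e hs.2]
    congr 1 <;> ring
  have h2 : ∫ t in T / 2..T, evalP W (c + σ * halfWidth T e t) t
      = T / 2 * ∫ s in (0:ℝ)..1,
          evalP W ((c + σ * e) + s * (-(σ * e))) (T / 2 + s * (T / 2)) := by
    have := intervalIntegral.mul_integral_comp_add_mul (a := 0) (b := 1)
      (f := fun t => evalP W (c + σ * halfWidth T e t) t) (T / 2) (T / 2)
    rw [mul_zero, add_zero, mul_one, add_halves] at this
    rw [← this]
    congr 1
    refine intervalIntegral.integral_congr fun s hs => ?_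
    rw [Set.uIcc_of_le zero_le_one] at hs
    have hh := halfWidth_upper hT e hs.1
    have he : T / 2 + T / 2 * s = (1 + s) * (T / 2) := by ring
    simp only [he, hh]
    congr 1 <;> ring
  rw [h1, h2, segment_integral hQ, segment_integral hQ]
  have i1 : ∀ s : ℝ, c + s * (σ * e) = c + σ * (s * e) := fun s => by ring
  have i2 : ∀ s : ℝ, (c + σ * e) + s * (-(σ * e)) = c + σ * ((1 - s) * e) := fun s => by ring
  have i3 : ∀ s : ℝ, T / 2 + s * (T / 2) = (1 + s) * (T / 2) := fun s => by ring
  simp only [i1, i2, i3, zero_add, one_mul, add_halves, add_neg_cancel_right]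
  ring

lemma straight_line_integral {P Q : MvPolynomial (Fin 2) ℝ} (hQ : MvPolynomial.pderiv 0 Q = P)
    (T c : ℝ) :
    ∫ t in (0:ℝ)..T, evalP (MvPolynomial.pderiv 1 Q + P) c t
      = evalP Q c T - evalP Q c 0 + ∫ t in (0:ℝ)..T, evalP P c t := by
  simpa using segment_integral hQ c 0 0 1 T

/-! ### The divergence theorem on the control volumes -/

/-- Fubini for a region whose horizontal sections at heights `t ∈ (0, T)` agree, up to endpoints,
with `(a t, b t)`, followed by integration of `∂ₜP + ∂ₓP` in `x`. -/
lemma region_integral {P Q : MvPolynomial (Fin 2) ℝ} (hQ : MvPolynomial.pderiv 0 Q = P)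
    {S : Set (ℝ × ℝ)} (hS : MeasurableSet S) {T X : ℝ} (hT : 0 < T) {a b : ℝ → ℝ}
    (ha : Continuous a) (hb : Continuous b) (hab : ∀ t ∈ Set.Ioo 0 T, a t ≤ b t)
    (hST : ∀ p ∈ S, p.2 ∈ Set.Ioo 0 T ∧ |p.1| ≤ X)
    (hlow : ∀ t ∈ Set.Ioo 0 T, ∀ x ∈ Set.Ioo (a t) (b t), (x, t) ∈ S)
    (hup : ∀ t ∈ Set.Ioo 0 T, ∀ x, (x, t) ∈ S → x ∈ Set.Icc (a t) (b t)) :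
    ∫ p in S, (evalP (MvPolynomial.pderiv 1 P) p.1 p.2 + evalP (MvPolynomial.pderiv 0 P) p.1 p.2)
      = (∫ t in (0:ℝ)..T, evalP (MvPolynomial.pderiv 1 Q + P) (b t) t)
        - ∫ t in (0:ℝ)..T, evalP (MvPolynomial.pderiv 1 Q + P) (a t) t := by
  set F : ℝ × ℝ → ℝ := fun p =>
    evalP (MvPolynomial.pderiv 1 P) p.1 p.2 + evalP (MvPolynomial.pderiv 0 P) p.1 p.2 with hF
  set W := MvPolynomial.pderiv 1 Q + P with hW
  have hFc : Continuous F := (evalP_continuous _).add (evalP_continuous _)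
  have hWx : MvPolynomial.pderiv 0 W = MvPolynomial.pderiv 1 P + MvPolynomial.pderiv 0 P := by
    rw [hW, map_add, ← hQ]
    congr 1
    exact pderiv_zero_one_comm Q
  have hSK : S ⊆ Set.Icc (-X) X ×ˢ Set.Icc 0 T := fun p hp =>
    ⟨abs_le.1 (hST p hp).2, Set.Ioo_subset_Icc_self (hST p hp).1⟩
  have hint : IntegrableOn F S :=
    (hFc.continuousOn.integrableOn_compact (isCompact_Icc.prod isCompact_Icc)).mono_set hSK
  have hsec : ∀ t, ∫ x, S.indicator F (x, t)
      = (Set.Ioo 0 T).indicator (fun t => evalP W (b t) t - evalP W (a t) t) t := by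
    intro t
    by_cases ht : t ∈ Set.Ioo 0 T
    · rw [Set.indicator_of_mem ht]
      have hm : MeasurableSet {x | (x, t) ∈ S} := measurable_prodMk_right hS
      have h1 : (fun x => S.indicator F (x, t))
          = Set.indicator {x | (x, t) ∈ S} fun x => F (x, t) := by
        ext x; simp [Set.indicator]
      have h2 : ({x | (x, t) ∈ S} : Set ℝ) =ᵐ[volume] Set.Ioc (a t) (b t) := by
        have l1 : Set.Ioo (a t) (b t) ≤ᵐ[volume] ({x | (x, t) ∈ S} : Set ℝ) :=
          LE.le.eventuallyLE fun x hx => hlow t ht x hx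
        have l2 : ({x | (x, t) ∈ S} : Set ℝ) ≤ᵐ[volume] Set.Icc (a t) (b t) :=
          LE.le.eventuallyLE fun x hx => hup t ht x hx
        exact (l2.trans_eq Ioc_ae_eq_Icc.symm).antisymm (Ioo_ae_eq_Ioc.symm.trans_le l1)
      rw [h1, integral_indicator hm, setIntegral_congr_set h2,
        ← intervalIntegral.integral_of_le (hab t ht)]
      refine intervalIntegral.integral_eq_sub_of_hasDerivAt (f := fun x => evalP W x t)
        (fun x _ => ?_) (Continuous.intervalIntegrable (by simp only [hF]; fun_prop) _ _)
      have := evalP_hasDerivAt W (hasDerivAt_id x) (hasDerivAt_const x t)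
      simpa [hWx, evalP_add, hF] using this
    · rw [Set.indicator_of_notMem ht]
      have : ∀ x, S.indicator F (x, t) = 0 := fun x =>
        Set.indicator_of_notMem (fun h => ht (hST _ h).1) _
      simp [this]
  rw [← integral_indicator hS, Measure.volume_eq_prod, integral_prod_symm _
    (by rw [← Measure.volume_eq_prod]; exact hint.integrable_indicator hS)]
  refine (integral_congr_ae (.of_forall hsec)).trans ?_
  rw [integral_indicator measurableSet_Ioo, ← integral_Ioc_eq_integral_Ioo,
    ← intervalIntegral.integral_of_le hT.le]
  exact intervalIntegral.integral_sub (Continuous.intervalIntegrable (by fun_prop) _ _)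
    (Continuous.intervalIntegrable (by fun_prop) _ _)

lemma lt_halfWidth_iff {T : ℝ} (hT : 0 < T) (e t y : ℝ) :
    y * (T / 2) + |t - T / 2| * e < e * (T / 2) ↔ y < halfWidth T e t := by
  have h : halfWidth T e t * (T / 2) = e * (T / 2) - |t - T / 2| * e := by
    rw [halfWidth]; field_simp
  rw [← mul_lt_mul_iff_of_pos_right (b := y) (half_pos hT), h]
  constructor <;> intro h <;> linarith

lemma le_halfWidth_iff {T : ℝ} (hT : 0 < T) (e t y : ℝ) :
    y * (T / 2) + |t - T / 2| * e ≤ e * (T / 2) ↔ y ≤ halfWidth T e t := by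
  have h : halfWidth T e t * (T / 2) = e * (T / 2) - |t - T / 2| * e := by
    rw [halfWidth]; field_simp
  rw [← mul_le_mul_iff_of_pos_right (b := y) (half_pos hT), h]
  constructor <;> intro h <;> linarith

lemma mem_sliverAt_iff {Δt : ℝ} (hT : 0 < Δt) (Δx δ x₀ x t : ℝ) :
    (x, t) ∈ sliverAt Δx Δt δ x₀ ↔ |x - x₀| < halfWidth Δt (δ * Δx) t :=
  lt_halfWidth_iff hT _ _ _

lemma mem_closure_sliverAt {Δt : ℝ} (hT : 0 < Δt) {Δx δ x₀ x t : ℝ}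
    (h : (x, t) ∈ closure (sliverAt Δx Δt δ x₀)) : |x - x₀| ≤ halfWidth Δt (δ * Δx) t := by
  have := closure_lt_subset_le (f := fun p : ℝ × ℝ =>
    |p.1 - x₀| * (Δt / 2) + |p.2 - Δt / 2| * (δ * Δx)) (g := fun _ => δ * Δx * (Δt / 2))
    (by fun_prop) (by fun_prop) h
  exact (le_halfWidth_iff hT _ _ _).1 this

lemma halfWidth_le {T e : ℝ} (hT : 0 < T) (he : 0 < e) (t : ℝ) : halfWidth T e t ≤ e := by
  have : 0 ≤ |t - T / 2| * (2 * e / T) := by positivity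
  unfold halfWidth; linarith

lemma halfWidth_pos_iff {T e : ℝ} (hT : 0 < T) (he : 0 < e) (t : ℝ) :
    0 < halfWidth T e t ↔ t ∈ Set.Ioo 0 T := by
  rw [← lt_halfWidth_iff hT, zero_mul, zero_add, mul_comm, mul_lt_mul_iff_of_pos_left he, abs_lt,
    Set.mem_Ioo]
  constructor <;> rintro ⟨h1, h2⟩ <;> constructor <;> linarith

lemma measurableSet_sliverAt (Δx Δt δ x₀ : ℝ) : MeasurableSet (sliverAt Δx Δt δ x₀) :=
  (isOpen_lt (by fun_prop) (by fun_prop)).measurableSet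

/-- Divergence theorem on the sliver. -/
lemma sliver_divergence (P : MvPolynomial (Fin 2) ℝ) {Δx Δt δ : ℝ} (hT : 0 < Δt)
    (he : 0 < δ * Δx) :
    ∫ p in sliverAt Δx Δt δ 0,
        (evalP (MvPolynomial.pderiv 1 P) p.1 p.2 + evalP (MvPolynomial.pderiv 0 P) p.1 p.2)
      = (-(Δt / 2) + -(δ * Δx)) *
          (∫ s in (0:ℝ)..1, evalP P (-(s * (δ * Δx))) (s * (Δt / 2)))
        + (-(Δt / 2) + δ * Δx) *
          (∫ s in (0:ℝ)..1, evalP P (-((1 - s) * (δ * Δx))) ((1 + s) * (Δt / 2)))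
        + (Δt / 2 + -(δ * Δx)) *
          (∫ s in (0:ℝ)..1, evalP P (s * (δ * Δx)) (s * (Δt / 2)))
        + (Δt / 2 + δ * Δx) *
          (∫ s in (0:ℝ)..1, evalP P ((1 - s) * (δ * Δx)) ((1 + s) * (Δt / 2))) := by
  obtain ⟨Q, hQ⟩ := exists_pderiv_zero_eq P
  have hc := halfWidth_continuous Δt (δ * Δx)
  rw [region_integral hQ (measurableSet_sliverAt _ _ _ _) (X := δ * Δx) hT
    (a := fun t => 0 + (-1) * halfWidth Δt (δ * Δx) t)
    (b := fun t => 0 + 1 * halfWidth Δt (δ * Δx) t) (by fun_prop) (by fun_prop),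
    bent_curve_integral hQ hT, bent_curve_integral hQ hT]
  · simp only [zero_add, one_mul, neg_one_mul]
    ring
  · intro t ht
    have := (halfWidth_pos_iff hT he t).2 ht
    linarith
  · rintro ⟨x, t⟩ hp
    rw [mem_sliverAt_iff hT, sub_zero] at hp
    have := abs_nonneg x
    exact ⟨(halfWidth_pos_iff hT he t).1 (by linarith), by
      have := halfWidth_le hT he t
      simp only; linarith⟩
  · rintro t ht x ⟨h1, h2⟩
    rw [mem_sliverAt_iff hT, sub_zero, abs_lt]
    constructor <;> linarith
  · rintro t ht x hp
    rw [mem_sliverAt_iff hT, sub_zero, abs_lt] at hp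
    constructor <;> linarith [hp.1, hp.2]

lemma integral_eq_antideriv {P Q : MvPolynomial (Fin 2) ℝ} (hQ : MvPolynomial.pderiv 0 Q = P)
    (a b t : ℝ) : ∫ x in a..b, evalP P x t = evalP Q b t - evalP Q a t := by
  refine intervalIntegral.integral_eq_sub_of_hasDerivAt (f := fun x => evalP Q x t)
    (fun x _ => ?_) (Continuous.intervalIntegrable (by fun_prop) _ _)
  simpa [hQ] using evalP_hasDerivAt Q (hasDerivAt_id x) (hasDerivAt_const x t)

/-- Divergence theorem on a cell with a sliver cut out on its left. -/
lemma leftSliver_divergence (P : MvPolynomial (Fin 2) ℝ) {Δx Δt δ : ℝ} (hT : 0 < Δt)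
    (he : 0 < δ * Δx) (heX : δ * Δx ≤ Δx) :
    ∫ p in cellCVleftSliver Δx Δt δ,
        (evalP (MvPolynomial.pderiv 1 P) p.1 p.2 + evalP (MvPolynomial.pderiv 0 P) p.1 p.2)
      = (∫ x in (0:ℝ)..Δx, evalP P x Δt) - (∫ x in (0:ℝ)..Δx, evalP P x 0)
        + (-(Δt / 2) + δ * Δx) *
          (∫ s in (0:ℝ)..1, evalP P (s * (δ * Δx)) (s * (Δt / 2)))
        + (-(Δt / 2) + -(δ * Δx)) *
          (∫ s in (0:ℝ)..1, evalP P ((1 - s) * (δ * Δx)) ((1 + s) * (Δt / 2)))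
        + ∫ t in (0:ℝ)..Δt, evalP P Δx t := by
  obtain ⟨Q, hQ⟩ := exists_pderiv_zero_eq P
  have hc := halfWidth_continuous Δt (δ * Δx)
  rw [region_integral hQ (S := cellCVleftSliver Δx Δt δ)
    ((measurableSet_Ioo.prod measurableSet_Ioo).diff isClosed_closure.measurableSet)
    (X := Δx) hT (a := fun t => 0 + 1 * halfWidth Δt (δ * Δx) t)
    (b := fun _ => Δx) (by fun_prop) (by fun_prop),
    bent_curve_integral hQ hT, straight_line_integral hQ, integral_eq_antideriv hQ,
    integral_eq_antideriv hQ]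
  · simp only [zero_add, one_mul]
    ring
  · intro t ht
    have := halfWidth_le hT he t
    linarith
  · rintro ⟨x, t⟩ ⟨⟨⟨h1, h2⟩, ht⟩, -⟩
    exact ⟨ht, abs_le.2 ⟨by simp only at *; linarith, h2.le⟩⟩
  · rintro t ht x ⟨h1, h2⟩
    have hp := (halfWidth_pos_iff hT he t).2 ht
    refine ⟨⟨⟨by simp only; linarith, h2⟩, ht⟩, fun h => ?_⟩
    have := (le_abs_self _).trans (mem_closure_sliverAt hT h)
    linarith
  · rintro t ht x ⟨⟨⟨h1, h2⟩, -⟩, hn⟩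
    refine ⟨?_, h2.le⟩
    by_contra! hlt
    refine hn (subset_closure ((mem_sliverAt_iff hT ..).2 ?_))
    simp only at h1
    rw [sub_zero, abs_of_pos h1]
    linarith

/-- Divergence theorem on a cell with a sliver cut out on its right. -/
lemma rightSliver_divergence (P : MvPolynomial (Fin 2) ℝ) {Δx Δt δ : ℝ} (hT : 0 < Δt)
    (he : 0 < δ * Δx) (heX : δ * Δx ≤ Δx) :
    ∫ p in cellCVrightSliver Δx Δt δ,
        (evalP (MvPolynomial.pderiv 1 P) p.1 p.2 + evalP (MvPolynomial.pderiv 0 P) p.1 p.2)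
      = (∫ x in (0:ℝ)..Δx, evalP P x Δt) - (∫ x in (0:ℝ)..Δx, evalP P x 0)
        - (∫ t in (0:ℝ)..Δt, evalP P 0 t)
        + (Δt / 2 + δ * Δx) *
          (∫ s in (0:ℝ)..1, evalP P (Δx - s * (δ * Δx)) (s * (Δt / 2)))
        + (Δt / 2 + -(δ * Δx)) *
          (∫ s in (0:ℝ)..1, evalP P (Δx - (1 - s) * (δ * Δx)) ((1 + s) * (Δt / 2))) := by
  obtain ⟨Q, hQ⟩ := exists_pderiv_zero_eq P
  have hc := halfWidth_continuous Δt (δ * Δx)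
  rw [region_integral hQ (S := cellCVrightSliver Δx Δt δ)
    ((measurableSet_Ioo.prod measurableSet_Ioo).diff isClosed_closure.measurableSet)
    (X := Δx) hT (b := fun t => Δx + (-1) * halfWidth Δt (δ * Δx) t)
    (a := fun _ => 0) (by fun_prop) (by fun_prop),
    bent_curve_integral hQ hT, straight_line_integral hQ, integral_eq_antideriv hQ,
    integral_eq_antideriv hQ]
  · simp only [neg_one_mul, ← sub_eq_add_neg]
    ring
  · intro t ht
    have := halfWidth_le hT he t
    linarith
  · rintro ⟨x, t⟩ ⟨⟨⟨h1, h2⟩, ht⟩, -⟩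
    exact ⟨ht, abs_le.2 ⟨by simp only at *; linarith, h2.le⟩⟩
  · rintro t ht x ⟨h1, h2⟩
    have hp := (halfWidth_pos_iff hT he t).2 ht
    refine ⟨⟨⟨h1, by simp only; linarith⟩, ht⟩, fun h => ?_⟩
    have := (neg_le_abs _).trans (mem_closure_sliverAt hT h)
    linarith
  · rintro t ht x ⟨⟨⟨h1, h2⟩, -⟩, hn⟩
    refine ⟨h1.le, ?_⟩
    by_contra! hlt
    refine hn (subset_closure ((mem_sliverAt_iff hT ..).2 ?_))
    simp only at h2
    rw [abs_of_neg (sub_neg.2 h2)]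
    linarith

/-! ### Energy estimates -/

/-- The two sides of a face together dissipate energy: pointwise the sum is
`½ |nx + nt| (f - h)²`. -/
lemma faceEnergy_add_nonneg {L : ℝ} (hL : 0 ≤ L) {f h : ℝ → ℝ} (hf : Continuous f)
    (hh : Continuous h) {nx nt mx mt : ℝ} (hx : mx = -nx) (ht : mt = -nt) :
    0 ≤ faceEnergy L f h nx nt + faceEnergy L h f mx mt := by
  subst hx ht
  have key : faceEnergy L f h nx nt + faceEnergy L h f (-nx) (-nt)
      = ∫ s in (0:ℝ)..L, |nx + nt| / 2 * (f s - h s) ^ 2 := by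
    unfold faceEnergy upwindFlux
    have e : ∀ a b c d : ℝ, a - b + (c - d) = a - b + c - d := fun a b c d => by ring
    rw [← intervalIntegral.integral_const_mul, ← intervalIntegral.integral_const_mul, e,
      ← intervalIntegral.integral_sub, ← intervalIntegral.integral_add,
      ← intervalIntegral.integral_sub]
    · congr 1
      ext s
      rw [← neg_add, abs_neg]
      ring
    all_goals exact Continuous.intervalIntegrable (by fun_prop) _ _
  rw [key]
  exact intervalIntegral.integral_nonneg hL fun s _ => by positivity

/-- The volume term tested with the solution itself is half a divergence. -/
lemma self_test (S : Set (ℝ × ℝ)) (q : MvPolynomial (Fin 2) ℝ) :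
    ∫ p in S, (evalP (MvPolynomial.pderiv 1 q) p.1 p.2
        + evalP (MvPolynomial.pderiv 0 q) p.1 p.2) * evalP q p.1 p.2
      = 1 / 2 * ∫ p in S, (evalP (MvPolynomial.pderiv 1 (q * q)) p.1 p.2
        + evalP (MvPolynomial.pderiv 0 (q * q)) p.1 p.2) := by
  rw [← integral_const_mul]
  congr 1
  ext p
  simp only [Derivation.leibniz, smul_eq_mul, evalP_add, evalP_mul]
  ring

lemma integral_mul_le_half_sq {L : ℝ} (hL : 0 ≤ L) {f h : ℝ → ℝ} (hf : Continuous f)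
    (hh : Continuous h) :
    ∫ x in (0:ℝ)..L, f x * h x
      ≤ 1 / 2 * (∫ x in (0:ℝ)..L, f x ^ 2) + 1 / 2 * ∫ x in (0:ℝ)..L, h x ^ 2 := by
  rw [← intervalIntegral.integral_const_mul, ← intervalIntegral.integral_const_mul,
    ← intervalIntegral.integral_add (Continuous.intervalIntegrable (by fun_prop) _ _)
      (Continuous.intervalIntegrable (by fun_prop) _ _)]
  refine intervalIntegral.integral_mono_on hL (Continuous.intervalIntegrable (by fun_prop) _ _)
    (Continuous.intervalIntegrable (by fun_prop) _ _) fun x _ => ?_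
  nlinarith [sq_nonneg (f x - h x)]

/-! ### Periodic indexing -/

lemma sum_cyclic_shift {M : ℕ} (hM : 1 ≤ M) (f : ℕ → ℝ) :
    ∑ m ∈ Finset.range M, f ((m + 1) % M) = ∑ m ∈ Finset.range M, f m := by
  obtain ⟨K, rfl⟩ := Nat.exists_eq_add_of_le' hM
  rw [Finset.sum_range_succ, Finset.sum_range_succ' f, Nat.mod_self]
  congr 1
  refine Finset.sum_congr rfl fun m hm => ?_
  rw [Nat.mod_eq_of_lt (by have := Finset.mem_range.1 hm; omega)]

lemma sum_range_two_mul (M : ℕ) (f : ℕ → ℝ) :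
    ∑ j ∈ Finset.range (2 * M), f j
      = ∑ m ∈ Finset.range M, (f (2 * m) + f (2 * m + 1)) := by
  induction M with
  | zero => simp
  | succ k ih =>
    rw [Nat.mul_succ, Finset.sum_range_succ, Finset.sum_range_succ, ih, Finset.sum_range_succ,
      add_assoc]

lemma left_neighbour_index {M m : ℕ} (hm : m < M) :
    (2 * ((m + 1) % M) + 2 * M - 1) % (2 * M) = 2 * m + 1 := by
  rcases Nat.lt_or_ge (m + 1) M with h | h
  · rw [Nat.mod_eq_of_lt h,
      show 2 * (m + 1) + 2 * M - 1 = 2 * m + 1 + 2 * M by omega, Nat.add_mod_right,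
      Nat.mod_eq_of_lt (by omega)]
  · obtain rfl : M = m + 1 := by omega
    rw [Nat.mod_self, Nat.mod_eq_of_lt (by omega)]
    omega

/-- One-step L² stability of the implicit ADER-DG method on the degenerate
(sliver) spacetime geometry for the linear advection equation `∂ₜu + ∂ₓu = 0`.

The spatially `2MΔx`-periodic strip carries `2M` cells indexed by
`j = 0,…,2M−1` (each written in its reference coordinates `(0,Δx)×(0,Δt)`), a
sliver at each even interface `k = 2m` (`m = 0,…,M−1`, written in its reference
coordinates, centred at `x = 0`), and vertical interfaces at the odd interface
indices.  The polynomial `q j` lives on the control volume of cell `j`, `g m`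
on the sliver at interface `2m`, and `u j` is the initial datum of cell `j`.
Even cell `2m` has the sliver `g m` on its left and cell `2m+1` on its right;
odd cell `2m+1` has cell `2m` on its left and the sliver `g ((m+1) % M)` on its
right; the sliver `m` has cell `(2m+2M−1) % 2M` on its left and cell `2m` on
its right.  On each lateral face the numerical flux `𝓕(q_j, r_F, n_F)` is
evaluated on the outward normal of the element, scaled by the face length
(`(∓Δt/2, ±δΔx)` on sliver faces, `(±1,0)` with arclength `dt` on vertical
faces).  If the element equations and the sliver equations hold for every test
polynomial `θ` of total degree `≤ N`, then
`Σ_j ∫_{Ω_j} q_j(x,Δt)² dx ≤ Σ_j ∫_{Ω_j} u_j(x)² dx`. -/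
theorem implicit_ADERDG_L2_stability_degenerate_geometry
    (N M : ℕ) (hM : 1 ≤ M) (Δx Δt δ : ℝ)
    (hΔx : 0 < Δx) (hΔt : 0 < Δt) (hδ0 : 0 < δ)
    (hδ : δ ≤ (1 / 2) * min (Δt / Δx) 1)
    (q g : ℕ → MvPolynomial (Fin 2) ℝ) (u : ℕ → Polynomial ℝ)
    (hqdeg : ∀ j, (q j).totalDegree ≤ N)
    (hgdeg : ∀ m, (g m).totalDegree ≤ N)
    (hudeg : ∀ j, (u j).natDegree ≤ N)
    -- element equations on the even cells `j = 2m` (sliver on the left,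
    -- vertical interface with cell `2m+1` on the right)
    (helemEven : ∀ m < M, ∀ θ : MvPolynomial (Fin 2) ℝ, θ.totalDegree ≤ N →
      (∫ x in (0:ℝ)..Δx, evalP θ x Δt * evalP (q (2 * m)) x Δt)
        - (∫ p in cellCVleftSliver Δx Δt δ,
            (evalP (MvPolynomial.pderiv 1 θ) p.1 p.2
              + evalP (MvPolynomial.pderiv 0 θ) p.1 p.2)
              * evalP (q (2 * m)) p.1 p.2)
        + (∫ s in (0:ℝ)..1, evalP θ (s * (δ * Δx)) (s * (Δt / 2)) *
            upwindFlux (evalP (q (2 * m)) (s * (δ * Δx)) (s * (Δt / 2)))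
              (evalP (g m) (s * (δ * Δx)) (s * (Δt / 2)))
              (-(Δt / 2)) (δ * Δx))
        + (∫ s in (0:ℝ)..1,
            evalP θ ((1 - s) * (δ * Δx)) ((1 + s) * (Δt / 2)) *
            upwindFlux
              (evalP (q (2 * m)) ((1 - s) * (δ * Δx)) ((1 + s) * (Δt / 2)))
              (evalP (g m) ((1 - s) * (δ * Δx)) ((1 + s) * (Δt / 2)))
              (-(Δt / 2)) (-(δ * Δx)))
        + (∫ t in (0:ℝ)..Δt, evalP θ Δx t *
            upwindFlux (evalP (q (2 * m)) Δx t) (evalP (q (2 * m + 1)) 0 t) 1 0)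
      = ∫ x in (0:ℝ)..Δx, evalP θ x 0 * (u (2 * m)).eval x)
    -- element equations on the odd cells `j = 2m+1` (vertical interface with
    -- cell `2m` on the left, sliver `g ((m+1) % M)` on the right)
    (helemOdd : ∀ m < M, ∀ θ : MvPolynomial (Fin 2) ℝ, θ.totalDegree ≤ N →
      (∫ x in (0:ℝ)..Δx, evalP θ x Δt * evalP (q (2 * m + 1)) x Δt)
        - (∫ p in cellCVrightSliver Δx Δt δ,
            (evalP (MvPolynomial.pderiv 1 θ) p.1 p.2
              + evalP (MvPolynomial.pderiv 0 θ) p.1 p.2)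
              * evalP (q (2 * m + 1)) p.1 p.2)
        + (∫ t in (0:ℝ)..Δt, evalP θ 0 t *
            upwindFlux (evalP (q (2 * m + 1)) 0 t) (evalP (q (2 * m)) Δx t)
              (-1) 0)
        + (∫ s in (0:ℝ)..1, evalP θ (Δx - s * (δ * Δx)) (s * (Δt / 2)) *
            upwindFlux
              (evalP (q (2 * m + 1)) (Δx - s * (δ * Δx)) (s * (Δt / 2)))
              (evalP (g ((m + 1) % M)) (-(s * (δ * Δx))) (s * (Δt / 2)))
              (Δt / 2) (δ * Δx))
        + (∫ s in (0:ℝ)..1,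
            evalP θ (Δx - (1 - s) * (δ * Δx)) ((1 + s) * (Δt / 2)) *
            upwindFlux
              (evalP (q (2 * m + 1)) (Δx - (1 - s) * (δ * Δx))
                ((1 + s) * (Δt / 2)))
              (evalP (g ((m + 1) % M)) (-((1 - s) * (δ * Δx)))
                ((1 + s) * (Δt / 2)))
              (Δt / 2) (-(δ * Δx)))
      = ∫ x in (0:ℝ)..Δx, evalP θ x 0 * (u (2 * m + 1)).eval x)
    -- sliver equations on the sliver at the even interface `k = 2m`, with left
    -- neighbour cell `(2m+2M−1) % 2M` and right neighbour cell `2m`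
    (hsliver : ∀ m < M, ∀ θ : MvPolynomial (Fin 2) ℝ, θ.totalDegree ≤ N →
      (∫ s in (0:ℝ)..1, evalP θ (-(s * (δ * Δx))) (s * (Δt / 2)) *
          upwindFlux (evalP (g m) (-(s * (δ * Δx))) (s * (Δt / 2)))
            (evalP (q ((2 * m + 2 * M - 1) % (2 * M)))
              (Δx - s * (δ * Δx)) (s * (Δt / 2)))
            (-(Δt / 2)) (-(δ * Δx)))
        + (∫ s in (0:ℝ)..1,
            evalP θ (-((1 - s) * (δ * Δx))) ((1 + s) * (Δt / 2)) *
            upwindFlux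
              (evalP (g m) (-((1 - s) * (δ * Δx))) ((1 + s) * (Δt / 2)))
              (evalP (q ((2 * m + 2 * M - 1) % (2 * M)))
                (Δx - (1 - s) * (δ * Δx)) ((1 + s) * (Δt / 2)))
              (-(Δt / 2)) (δ * Δx))
        + (∫ s in (0:ℝ)..1, evalP θ (s * (δ * Δx)) (s * (Δt / 2)) *
            upwindFlux (evalP (g m) (s * (δ * Δx)) (s * (Δt / 2)))
              (evalP (q (2 * m)) (s * (δ * Δx)) (s * (Δt / 2)))
              (Δt / 2) (-(δ * Δx)))
        + (∫ s in (0:ℝ)..1,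
            evalP θ ((1 - s) * (δ * Δx)) ((1 + s) * (Δt / 2)) *
            upwindFlux
              (evalP (g m) ((1 - s) * (δ * Δx)) ((1 + s) * (Δt / 2)))
              (evalP (q (2 * m)) ((1 - s) * (δ * Δx)) ((1 + s) * (Δt / 2)))
              (Δt / 2) (δ * Δx))
      = ∫ p in sliverAt Δx Δt δ 0,
          (evalP (MvPolynomial.pderiv 1 θ) p.1 p.2
            + evalP (MvPolynomial.pderiv 0 θ) p.1 p.2)
            * evalP (g m) p.1 p.2) :
    ∑ j ∈ Finset.range (2 * M),
        ∫ x in (0:ℝ)..Δx, (evalP (q j) x Δt) ^ 2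
      ≤ ∑ j ∈ Finset.range (2 * M),
          ∫ x in (0:ℝ)..Δx, ((u j).eval x) ^ 2 := by
  have hT := hΔt
  have he : 0 < δ * Δx := mul_pos hδ0 hΔx
  have hδ1 : δ ≤ 1 := by
    have := min_le_right (Δt / Δx) 1
    linarith
  have heX : δ * Δx ≤ Δx := by nlinarith
  -- Energy of the left and right faces of the sliver, seen from the sliver.
  let SL : ℕ → ℝ := fun m =>
    faceEnergy 1 (fun s => evalP (g m) (-(s * (δ * Δx))) (s * (Δt / 2)))
      (fun s => evalP (q ((2 * m + 2 * M - 1) % (2 * M))) (Δx - s * (δ * Δx)) (s * (Δt / 2)))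
      (-(Δt / 2)) (-(δ * Δx))
    + faceEnergy 1 (fun s => evalP (g m) (-((1 - s) * (δ * Δx))) ((1 + s) * (Δt / 2)))
      (fun s => evalP (q ((2 * m + 2 * M - 1) % (2 * M))) (Δx - (1 - s) * (δ * Δx))
        ((1 + s) * (Δt / 2)))
      (-(Δt / 2)) (δ * Δx)
  let SR : ℕ → ℝ := fun m =>
    faceEnergy 1 (fun s => evalP (g m) (s * (δ * Δx)) (s * (Δt / 2)))
      (fun s => evalP (q (2 * m)) (s * (δ * Δx)) (s * (Δt / 2)))
      (Δt / 2) (-(δ * Δx))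
    + faceEnergy 1 (fun s => evalP (g m) ((1 - s) * (δ * Δx)) ((1 + s) * (Δt / 2)))
      (fun s => evalP (q (2 * m)) ((1 - s) * (δ * Δx)) ((1 + s) * (Δt / 2)))
      (Δt / 2) (δ * Δx)
  have hS : ∀ m < M, SL m + SR m = 0 := by
    intro m hm
    have h := hsliver m hm (g m) (hgdeg m)
    rw [self_test, sliver_divergence _ hT he] at h
    simp only [evalP_mul] at h
    simp only [← sq] at h
    simp only [SL, SR, faceEnergy]
    linarith
  -- The face energies of the cells cancel against those of the slivers up to dissipation; the right
  -- neighbour of cell `2m + 1` is the sliver `(m + 1) % M`, whose left neighbour is that cell.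
  have hcell : ∀ m < M,
      (∫ x in (0:ℝ)..Δx, evalP (q (2 * m)) x Δt ^ 2)
        + (∫ x in (0:ℝ)..Δx, evalP (q (2 * m + 1)) x Δt ^ 2)
      ≤ (∫ x in (0:ℝ)..Δx, (u (2 * m)).eval x ^ 2)
        + (∫ x in (0:ℝ)..Δx, (u (2 * m + 1)).eval x ^ 2)
        + 2 * (SR m + SL ((m + 1) % M)) := by
    intro m hm
    have hE := helemEven m hm (q (2 * m)) (hqdeg _)
    have hO := helemOdd m hm (q (2 * m + 1)) (hqdeg _)
    rw [self_test, leftSliver_divergence _ hT he heX] at hE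
    rw [self_test, rightSliver_divergence _ hT he heX] at hO
    simp only [evalP_mul] at hE hO
    simp only [← sq] at hE hO
    have yE := integral_mul_le_half_sq hΔx.le (f := fun x => evalP (q (2 * m)) x 0)
      (h := fun x => (u (2 * m)).eval x) (by fun_prop) (by fun_prop)
    have yO := integral_mul_le_half_sq hΔx.le (f := fun x => evalP (q (2 * m + 1)) x 0)
      (h := fun x => (u (2 * m + 1)).eval x) (by fun_prop) (by fun_prop)
    have f1 := faceEnergy_add_nonneg zero_le_one
      (f := fun s => evalP (q (2 * m)) (s * (δ * Δx)) (s * (Δt / 2)))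
      (h := fun s => evalP (g m) (s * (δ * Δx)) (s * (Δt / 2)))
      (nx := -(Δt / 2)) (nt := δ * Δx) (mx := Δt / 2) (mt := -(δ * Δx))
      (by fun_prop) (by fun_prop) (by ring) (by ring)
    have f2 := faceEnergy_add_nonneg zero_le_one
      (f := fun s => evalP (q (2 * m)) ((1 - s) * (δ * Δx)) ((1 + s) * (Δt / 2)))
      (h := fun s => evalP (g m) ((1 - s) * (δ * Δx)) ((1 + s) * (Δt / 2)))
      (nx := -(Δt / 2)) (nt := -(δ * Δx)) (mx := Δt / 2) (mt := δ * Δx)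
      (by fun_prop) (by fun_prop) (by ring) (by ring)
    have f3 := faceEnergy_add_nonneg zero_le_one
      (f := fun s => evalP (q (2 * m + 1)) (Δx - s * (δ * Δx)) (s * (Δt / 2)))
      (h := fun s => evalP (g ((m + 1) % M)) (-(s * (δ * Δx))) (s * (Δt / 2)))
      (nx := Δt / 2) (nt := δ * Δx) (mx := -(Δt / 2)) (mt := -(δ * Δx))
      (by fun_prop) (by fun_prop) (by ring) (by ring)
    have f4 := faceEnergy_add_nonneg zero_le_one
      (f := fun s => evalP (q (2 * m + 1)) (Δx - (1 - s) * (δ * Δx)) ((1 + s) * (Δt / 2)))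
      (h := fun s => evalP (g ((m + 1) % M)) (-((1 - s) * (δ * Δx))) ((1 + s) * (Δt / 2)))
      (nx := Δt / 2) (nt := -(δ * Δx)) (mx := -(Δt / 2)) (mt := δ * Δx)
      (by fun_prop) (by fun_prop) (by ring) (by ring)
    have f5 := faceEnergy_add_nonneg hT.le (f := fun t => evalP (q (2 * m)) Δx t)
      (h := fun t => evalP (q (2 * m + 1)) 0 t) (nx := 1) (nt := 0) (mx := -1) (mt := 0)
      (by fun_prop) (by fun_prop) (by ring) (by ring)
    simp only [SL, SR, left_neighbour_index hm]
    simp only [faceEnergy] at f1 f2 f3 f4 f5 ⊢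
    linarith
  rw [sum_range_two_mul, sum_range_two_mul]
  refine (Finset.sum_le_sum fun m hm => hcell m (Finset.mem_range.1 hm)).trans_eq ?_
  rw [Finset.sum_add_distrib, ← Finset.mul_sum, Finset.sum_add_distrib (f := SR),
    sum_cyclic_shift hM SL, ← Finset.sum_add_distrib (f := SR),
    Finset.sum_eq_zero (f := fun m => SR m + SL m)
      fun m hm => by rw [add_comm]; exact hS m (Finset.mem_range.1 hm)]
  ring
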